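/- (Dubinin's inequality) Let P(z) = ∑_{j=0}^{n} a_j z^j be a complex polynomial of degree n ≥ 1 all of whose zeros lie in |z| ≤ 1. Then max_{|z|=1}|P′(z)| ≥ (1/2)·(n + (|a_n| − |a_0|)/(|a_n| + |a_0|))·max_{|z|=1}|P(z)|. -/

import Mathlib

open Polynomial Metric

/-- The maximum of `|P(z)|` over the circle `|z| = r`. -/
noncomputable def maxMod (P : Polynomial ℂ) (r : ℝ) : ℝ :=
  ⨆ z : sphere (0 : ℂ) r, ‖(P.eval z : ℂ)‖

/-!
On `|z| = r`, the quantity `z P'(z) / P(z)` is the sum of `z / (z - w)` over the roots `w`, and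
`z / (z - w) = (1 + H) / 2` where `H = (z + w) / (z - w)` is the Herglotz–Riesz kernel. By Harnack's
inequality, `Re H ≥ φ(|w| / r)` where `φ(t) = (1 - t) / (1 + t)`. Since
`φ(s t) = (φ(s) + φ(t)) / (1 + φ(s) φ(t))`, the function `φ` is subadditive for multiplication on
`[0, 1]`, so the bounds for the separate roots combine into `φ(∏ |w| / rⁿ)`, and
`∏ |w| = |a₀| / |aₙ|`. It remains to take for `z` a point where `|P|` is maximal.
-/

section OrderedField

variable {K : Type*} [Field K] [LinearOrder K] [IsStrictOrderedRing K]

lemma mul_sub_mul_div_mul_add_mul_le {a b c d : K} (ha : 0 < a) (hb : 0 ≤ b) (hba : b ≤ a)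
    (hc : 0 < c) (hd : 0 ≤ d) (hdc : d ≤ c) :
    (a * c - b * d) / (a * c + b * d) ≤ (a - b) / (a + b) + (c - d) / (c + d) := by
  have hsub : b * d ≤ a * c := by gcongr
  have hdiff : (a - b) / (a + b) + (c - d) / (c + d) - (a * c - b * d) / (a * c + b * d) =
      (a - b) / (a + b) * ((c - d) / (c + d)) * ((a * c - b * d) / (a * c + b * d)) := by
    have hab : a + b ≠ 0 := by positivity
    have hcd : c + d ≠ 0 := by positivity
    have habcd : a * c + b * d ≠ 0 := by positivity
    field_simp
    ring
  rw [← sub_nonneg] at hba hdc hsub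
  rw [← sub_nonneg, hdiff]
  positivity

lemma multiset_prod_le_pow_card {r : K} {s : Multiset K} (hs : ∀ x ∈ s, x ∈ Set.Icc 0 r) :
    s.prod ≤ r ^ s.card := by
  simpa using Multiset.prod_map_le_prod_map₀ id (fun _ ↦ r) (fun x hx ↦ (hs x hx).1)
    fun x hx ↦ (hs x hx).2

lemma pow_card_sub_prod_div_le_sum {r : K} (hr : 0 < r) {s : Multiset K}
    (hs : ∀ x ∈ s, x ∈ Set.Icc 0 r) :
    (r ^ s.card - s.prod) / (r ^ s.card + s.prod) ≤ (s.map fun x ↦ (r - x) / (r + x)).sum := by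
  induction s using Multiset.induction_on with
  | empty => simp
  | cons x s ih =>
    obtain ⟨hx, hs⟩ := Multiset.forall_mem_cons.1 hs
    rw [Multiset.card_cons, pow_succ', Multiset.prod_cons, Multiset.map_cons, Multiset.sum_cons]
    calc (r * r ^ s.card - x * s.prod) / (r * r ^ s.card + x * s.prod)
        ≤ (r - x) / (r + x) + (r ^ s.card - s.prod) / (r ^ s.card + s.prod) :=
          mul_sub_mul_div_mul_add_mul_le hr hx.1 hx.2 (pow_pos hr _)
            (Multiset.prod_nonneg fun y hy ↦ (hs y hy).1) (multiset_prod_le_pow_card hs)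
      _ ≤ (r - x) / (r + x) + (s.map fun x ↦ (r - x) / (r + x)).sum := by gcongr; exact ih hs

end OrderedField

lemma norm_coeff_zero_eq_norm_leadingCoeff_mul_prod_roots {K : Type*} [NormedField K] {P : K[X]}
    (hP : P.Splits) : ‖P.coeff 0‖ = ‖P.leadingCoeff‖ * (P.roots.map norm).prod := by
  have hprod : (P.roots.map norm).prod = ‖P.roots.prod‖ :=
    (map_multiset_prod (normHom : K →*₀ ℝ) P.roots).symm
  simp [hP.coeff_zero_eq_leadingCoeff_mul_prod_roots, hprod]

lemma norm_sub_norm_div_norm_add_norm_le_re_herglotzRieszKernel {z w : ℂ} (hw : ‖w‖ ≤ ‖z‖) :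
    (‖z‖ - ‖w‖) / (‖z‖ + ‖w‖) ≤ (herglotzRieszKernel 0 w z).re := by
  rcases hw.lt_or_eq with hlt | heq
  · simpa [herglotzRieszKernel_def] using
      le_re_herglotzRieszKernel (c := 0) (z := z) (w := w) (R := ‖z‖) (by simp) (by simpa)
  · have hre : (herglotzRieszKernel 0 w z).re = poissonKernel 0 w z :=
      (congrFun poissonKernel_eq_re_herglotzRieszKernel z).symm
    simp [hre, poissonKernel_def, heq]

lemma mul_eval_derivative_div_eval_eq_sum_herglotzRieszKernel {P : ℂ[X]} {z : ℂ}
    (hz : P.eval z ≠ 0) :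
    z * (P.derivative.eval z / P.eval z) =
      (P.natDegree + (P.roots.map (herglotzRieszKernel 0 · z)).sum) / 2 := by
  have hP : P.Splits := IsAlgClosed.splits P
  have hterm : ∀ w ∈ P.roots, z * (1 / (z - w)) = (1 + herglotzRieszKernel 0 w z) / 2 := by
    intro w hw
    have hzw : z - w ≠ 0 :=
      sub_ne_zero.2 fun h ↦ hz (h ▸ isRoot_of_mem_roots hw)
    rw [herglotzRieszKernel_def, sub_zero, sub_zero]
    field_simp
    ring
  rw [hP.eval_derivative_div_eval_of_ne_zero hz, ← Multiset.sum_map_mul_left,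
    Multiset.map_congr rfl hterm, Multiset.sum_map_div, Multiset.sum_map_add,
    hP.natDegree_eq_card_roots]
  simp

lemma re_mul_eval_derivative_div_eval_eq_sum {P : ℂ[X]} {z : ℂ} (hz : P.eval z ≠ 0) :
    (z * (P.derivative.eval z / P.eval z)).re =
      1 / 2 * (P.natDegree + (P.roots.map fun w ↦ (herglotzRieszKernel 0 w z).re).sum) := by
  have hsum : (P.roots.map (herglotzRieszKernel 0 · z)).sum.re =
      (P.roots.map fun w ↦ (herglotzRieszKernel 0 w z).re).sum := by
    simpa using map_multiset_sum Complex.reAddGroupHom (P.roots.map (herglotzRieszKernel 0 · z))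
  rw [mul_eval_derivative_div_eval_eq_sum_herglotzRieszKernel hz, Complex.div_ofNat_re,
    Complex.add_re, Complex.natCast_re, hsum]
  ring

lemma le_re_mul_eval_derivative_div_eval {P : ℂ[X]} {z : ℂ} (hz : z ≠ 0) (hPz : P.eval z ≠ 0)
    (hroots : ∀ w, P.IsRoot w → ‖w‖ ≤ ‖z‖) :
    1 / 2 * (P.natDegree + (‖P.leadingCoeff‖ * ‖z‖ ^ P.natDegree - ‖P.coeff 0‖) /
        (‖P.leadingCoeff‖ * ‖z‖ ^ P.natDegree + ‖P.coeff 0‖)) ≤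
      (z * (P.derivative.eval z / P.eval z)).re := by
  have hP : P.Splits := IsAlgClosed.splits P
  have hlc : ‖P.leadingCoeff‖ ≠ 0 := by
    rw [norm_ne_zero_iff, leadingCoeff_ne_zero]
    rintro rfl
    exact hPz eval_zero
  have hle : ∀ w ∈ P.roots, ‖w‖ ≤ ‖z‖ := fun w hw ↦ hroots w (isRoot_of_mem_roots hw)
  have hIcc : ∀ x ∈ P.roots.map norm, x ∈ Set.Icc 0 ‖z‖ := by
    simpa only [Multiset.mem_map, forall_exists_index, and_imp, forall_apply_eq_imp_iff₂,
      Set.mem_Icc, norm_nonneg, true_and] using hle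
  have hsum : (‖z‖ ^ P.natDegree - (P.roots.map norm).prod) /
      (‖z‖ ^ P.natDegree + (P.roots.map norm).prod) ≤
        (P.roots.map fun w ↦ (herglotzRieszKernel 0 w z).re).sum := by
    calc _ ≤ (P.roots.map fun w ↦ (‖z‖ - ‖w‖) / (‖z‖ + ‖w‖)).sum := by
          simpa [hP.natDegree_eq_card_roots] using
            pow_card_sub_prod_div_le_sum (norm_pos_iff.2 hz) hIcc
      _ ≤ _ := Multiset.sum_map_le_sum_map _ _ fun w hw ↦
          norm_sub_norm_div_norm_add_norm_le_re_herglotzRieszKernel (hle w hw)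
  rw [re_mul_eval_derivative_div_eval_eq_sum hPz,
    norm_coeff_zero_eq_norm_leadingCoeff_mul_prod_roots hP, ← mul_sub, ← mul_add,
    mul_div_mul_left _ _ hlc]
  gcongr

lemma mul_norm_eval_le_norm_mul_norm_eval_derivative {P : ℂ[X]} {z : ℂ} (hz : z ≠ 0)
    (hroots : ∀ w, P.IsRoot w → ‖w‖ ≤ ‖z‖) :
    1 / 2 * (P.natDegree + (‖P.leadingCoeff‖ * ‖z‖ ^ P.natDegree - ‖P.coeff 0‖) /
        (‖P.leadingCoeff‖ * ‖z‖ ^ P.natDegree + ‖P.coeff 0‖)) * ‖P.eval z‖ ≤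
      ‖z‖ * ‖P.derivative.eval z‖ := by
  by_cases hPz : P.eval z = 0
  · rw [hPz, norm_zero, mul_zero]
    positivity
  · rw [← le_div_iff₀ (norm_pos_iff.2 hPz), mul_div_assoc, ← norm_div, ← norm_mul]
    exact (le_re_mul_eval_derivative_div_eval hz hPz hroots).trans (Complex.re_le_norm _)

lemma norm_eval_le_maxMod (P : ℂ[X]) (z : ℂ) : ‖P.eval z‖ ≤ maxMod P ‖z‖ := by
  have hbdd : BddAbove (Set.range fun w : sphere (0 : ℂ) ‖z‖ ↦ ‖P.eval (w : ℂ)‖) :=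
    (isCompact_range (by fun_prop)).bddAbove
  exact le_ciSup hbdd ⟨z, by simp⟩

lemma exists_norm_eval_eq_maxMod (P : ℂ[X]) {r : ℝ} (hr : 0 ≤ r) :
    ∃ z : ℂ, ‖z‖ = r ∧ ‖P.eval z‖ = maxMod P r := by
  obtain ⟨z, hz, hmax⟩ := (isCompact_sphere (0 : ℂ) r).exists_isMaxOn
    (NormedSpace.sphere_nonempty.2 hr) (f := fun w ↦ ‖P.eval w‖) (by fun_prop)
  exact ⟨z, mem_sphere_zero_iff_norm.1 hz, (hmax.iSup_eq hz).symm⟩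

theorem stmt_12_general {P : ℂ[X]} {r : ℝ} (hr : 0 < r) (hroots : ∀ w, P.IsRoot w → ‖w‖ ≤ r) :
    1 / 2 * (P.natDegree + (‖P.leadingCoeff‖ * r ^ P.natDegree - ‖P.coeff 0‖) /
        (‖P.leadingCoeff‖ * r ^ P.natDegree + ‖P.coeff 0‖)) * maxMod P r ≤
      r * maxMod P.derivative r := by
  obtain ⟨z, rfl, hmax⟩ := exists_norm_eval_eq_maxMod P hr.le
  rw [← hmax]
  calc _ ≤ ‖z‖ * ‖P.derivative.eval z‖ :=
        mul_norm_eval_le_norm_mul_norm_eval_derivative (norm_pos_iff.1 hr) hroots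
    _ ≤ ‖z‖ * maxMod P.derivative ‖z‖ := by gcongr; exact norm_eval_le_maxMod _ z

theorem stmt_12 (n : ℕ) (hn : 1 ≤ n) (P : Polynomial ℂ) (hdeg : P.natDegree = n)
    (hroots : ∀ w : ℂ, P.IsRoot w → ‖w‖ ≤ 1) :
    maxMod (Polynomial.derivative P) 1 ≥
      (1 / 2) *
        ((n : ℝ) + (‖P.coeff n‖ - ‖P.coeff 0‖) /
            (‖P.coeff n‖ + ‖P.coeff 0‖)) *
        maxMod P 1 := by
  subst hdeg
  simpa using stmt_12_general one_pos hroots
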